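/- arXiv:1805.05150 — 6 statements merged into one kernel-verified Lean document; each statement's English description precedes it below -/
import Mathlib

section
/- Under the Gutiérrez conditions, set α := min{μ₁, μ₂−μ₁} > 0. Then for every χ ∈ {0,1} and every 2×2 real matrix A = (A_ij): χ·Q₁(A) + (1−χ)·Q₂(A) ≥ −4μ₁·det(A) + χ·α[(A₁₁+A₂₂)² + (A₁₂−A₂₁)²] + (1−χ)·α[(A₁₁−A₂₂)² + A₁₂² + A₂₁²]. -/
/-- The isotropic elasticity quadratic form on 2×2 real matrices with Lamé
parameters `lam`, `mu`: `Q_{λ,μ}(A) = (λ+2μ)(A₁₁²+A₂₂²) + 2λA₁₁A₂₂ + μ(A₁₂+A₂₁)²`. -/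
def isoQ (lam mu : ℝ) (A : Matrix (Fin 2) (Fin 2) ℝ) : ℝ :=
  (lam + 2 * mu) * ((A 0 0) ^ 2 + (A 1 1) ^ 2) + 2 * lam * (A 0 0 * A 1 1)
    + mu * (A 0 1 + A 1 0) ^ 2

/-- The determinant of a 2×2 real matrix. -/
def det2 (A : Matrix (Fin 2) (Fin 2) ℝ) : ℝ := A 0 0 * A 1 1 - A 0 1 * A 1 0

/-!
Move the determinant to the left and consider `Q_{λ,μ} + 4ν det`. In the conformal coordinates
`A₁₁ + A₂₂`, `A₁₂ - A₂₁` and the anticonformal coordinates `A₁₁ - A₂₂`, `A₁₂ + A₂₁` this form is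
diagonal, with coefficients `λ + μ + ν`, `ν` and `μ - ν`, `μ - ν`. The choice
`ν = μ₁ = -(λ₂ + μ₂)` annihilates the anticonformal part of the first phase and the trace part of
the second; the remaining coefficients are at least `α`. The estimate is affine in `χ`, so it also
holds for mixtures `χ ∈ [0, 1]`.
-/

section TranslatedForm

variable (A : Matrix (Fin 2) (Fin 2) ℝ)

theorem isoQ_eq_sum_sq (lam mu : ℝ) :
    isoQ lam mu A = (lam + mu) * (A 0 0 + A 1 1) ^ 2
      + mu * ((A 0 0 - A 1 1) ^ 2 + (A 0 1 + A 1 0) ^ 2) := by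
  unfold isoQ
  ring

theorem four_mul_det2 :
    4 * det2 A = ((A 0 0 + A 1 1) ^ 2 + (A 0 1 - A 1 0) ^ 2)
      - ((A 0 0 - A 1 1) ^ 2 + (A 0 1 + A 1 0) ^ 2) := by
  unfold det2
  ring

theorem isoQ_add_four_mul_det2 (lam mu ν : ℝ) :
    isoQ lam mu A + 4 * ν * det2 A =
      (lam + mu + ν) * (A 0 0 + A 1 1) ^ 2 + ν * (A 0 1 - A 1 0) ^ 2
        + (mu - ν) * ((A 0 0 - A 1 1) ^ 2 + (A 0 1 + A 1 0) ^ 2) := by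
  rw [isoQ_eq_sum_sq, mul_right_comm, four_mul_det2]
  ring

variable {lam mu ν α : ℝ}

theorem mul_conformal_le_isoQ_add_four_mul_det2
    (hα : α ≤ lam + mu + ν) (hαν : α ≤ ν) (hν : ν ≤ mu) :
    α * ((A 0 0 + A 1 1) ^ 2 + (A 0 1 - A 1 0) ^ 2) ≤ isoQ lam mu A + 4 * ν * det2 A := by
  have anticonformal_nonneg :
      0 ≤ (mu - ν) * ((A 0 0 - A 1 1) ^ 2 + (A 0 1 + A 1 0) ^ 2) :=
    mul_nonneg (sub_nonneg.mpr hν) (by positivity)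
  calc α * ((A 0 0 + A 1 1) ^ 2 + (A 0 1 - A 1 0) ^ 2)
      = α * (A 0 0 + A 1 1) ^ 2 + α * (A 0 1 - A 1 0) ^ 2 := mul_add _ _ _
    _ ≤ (lam + mu + ν) * (A 0 0 + A 1 1) ^ 2 + ν * (A 0 1 - A 1 0) ^ 2 := by gcongr
    _ ≤ isoQ lam mu A + 4 * ν * det2 A := by
      rw [isoQ_add_four_mul_det2]
      exact le_add_of_nonneg_right anticonformal_nonneg

theorem mul_traceless_le_isoQ_add_four_mul_det2
    (htrace : 0 ≤ lam + mu + ν) (hαν : α ≤ ν) (hα : α ≤ mu - ν) :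
    α * ((A 0 0 - A 1 1) ^ 2 + 2 * ((A 0 1) ^ 2 + (A 1 0) ^ 2))
      ≤ isoQ lam mu A + 4 * ν * det2 A := by
  have trace_nonneg : 0 ≤ (lam + mu + ν) * (A 0 0 + A 1 1) ^ 2 :=
    mul_nonneg htrace (sq_nonneg _)
  calc α * ((A 0 0 - A 1 1) ^ 2 + 2 * ((A 0 1) ^ 2 + (A 1 0) ^ 2))
      = α * (A 0 1 - A 1 0) ^ 2 + α * ((A 0 0 - A 1 1) ^ 2 + (A 0 1 + A 1 0) ^ 2) := by ring
    _ ≤ ν * (A 0 1 - A 1 0) ^ 2 + (mu - ν) * ((A 0 0 - A 1 1) ^ 2 + (A 0 1 + A 1 0) ^ 2) := by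
      gcongr
    _ ≤ isoQ lam mu A + 4 * ν * det2 A := by
      rw [isoQ_add_four_mul_det2, add_assoc]
      exact le_add_of_nonneg_left trace_nonneg

end TranslatedForm

theorem stmt_2_general {lam1 mu1 lam2 mu2 ν α χ : ℝ}
    (hbulk1 : 0 ≤ lam1 + mu1) (hν : ν ≤ mu1) (hbulk2 : -(lam2 + mu2) ≤ ν)
    (hα : 0 ≤ α) (hαν : α ≤ ν) (hαmu2 : α ≤ mu2 - ν)
    (hχ : χ ∈ Set.Icc 0 1) (A : Matrix (Fin 2) (Fin 2) ℝ) :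
    χ * isoQ lam1 mu1 A + (1 - χ) * isoQ lam2 mu2 A
      ≥ -(4 * ν) * det2 A
        + χ * α * ((A 0 0 + A 1 1) ^ 2 + (A 0 1 - A 1 0) ^ 2)
        + (1 - χ) * α * ((A 0 0 - A 1 1) ^ 2 + (A 0 1) ^ 2 + (A 1 0) ^ 2) := by
  have first_phase :
      α * ((A 0 0 + A 1 1) ^ 2 + (A 0 1 - A 1 0) ^ 2) ≤ isoQ lam1 mu1 A + 4 * ν * det2 A :=
    mul_conformal_le_isoQ_add_four_mul_det2 A (by linarith) hαν hν
  have second_phase :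
      α * ((A 0 0 - A 1 1) ^ 2 + (A 0 1) ^ 2 + (A 1 0) ^ 2)
        ≤ isoQ lam2 mu2 A + 4 * ν * det2 A := by
    calc α * ((A 0 0 - A 1 1) ^ 2 + (A 0 1) ^ 2 + (A 1 0) ^ 2)
        ≤ α * ((A 0 0 - A 1 1) ^ 2 + 2 * ((A 0 1) ^ 2 + (A 1 0) ^ 2)) :=
          mul_le_mul_of_nonneg_left (by linarith [sq_nonneg (A 0 1), sq_nonneg (A 1 0)]) hα
      _ ≤ isoQ lam2 mu2 A + 4 * ν * det2 A :=
          mul_traceless_le_isoQ_add_four_mul_det2 A (by linarith) hαν hαmu2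
  have weighted_first := mul_le_mul_of_nonneg_left first_phase hχ.1
  have weighted_second := mul_le_mul_of_nonneg_left second_phase (sub_nonneg.mpr hχ.2)
  linarith

theorem stmt_2 (lam1 mu1 lam2 mu2 : ℝ)
    (h1 : 0 < mu1) (h2 : mu1 = -(lam2 + mu2)) (h3 : mu1 < mu2)
    (h4 : 0 < lam1 + mu1)
    (α : ℝ) (hα : α = min mu1 (mu2 - mu1))
    (χ : ℝ) (hχ : χ = 0 ∨ χ = 1)
    (A : Matrix (Fin 2) (Fin 2) ℝ) :
    χ * isoQ lam1 mu1 A + (1 - χ) * isoQ lam2 mu2 A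
      ≥ -(4 * mu1) * det2 A
        + χ * α * ((A 0 0 + A 1 1) ^ 2 + (A 0 1 - A 1 0) ^ 2)
        + (1 - χ) * α * ((A 0 0 - A 1 1) ^ 2 + (A 0 1) ^ 2 + (A 1 0) ^ 2) := by
  have hχ_mem : χ ∈ Set.Icc 0 1 := by rcases hχ with rfl | rfl <;> simp
  exact stmt_2_general h4.le le_rfl h2.ge (hα ▸ le_min h1.le (sub_nonneg.mpr h3.le))
    (hα ▸ min_le_left _ _) (hα ▸ min_le_right _ _) hχ_mem A
end

section
/- Under the Gutiérrez conditions, for each i ∈ {1,2} the function A ↦ Qᵢ(A) + 4μ₁·det(A) on 2×2 real matrices is nonnegative, and it is convex. -/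
/-!
A quadratic form `Q` that is nonnegative is convex: when `a + b = 1`, the gap in the convexity
inequality at `x`, `y` is exactly `a b Q (x - y)`. It remains to see that `Q_{λ,μ} + 4 m det` is
nonnegative, and it is diagonal in the trace, the two shear components and the rotation component
of the matrix, with weights `λ + μ + m`, `μ - m`, `μ - m` and `m`. The shear weights vanish for the
first material, and the trace weight for the second.
-/

section QuadraticMap

variable {R M N : Type*} [CommRing R] [AddCommGroup M] [Module R M] [AddCommGroup N] [Module R N]

theorem quadraticMap_smul_add_smul_of_add_eq_one (Q : QuadraticMap R M N) {a b : R}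
    (hab : a + b = 1) (x y : M) :
    a • Q x + b • Q y = Q (a • x + b • y) + a • b • Q (x - y) := by
  have expand_add : Q (a • x + b • y) =
      (a * a) • Q x + (b * b) • Q y + (a * b) • QuadraticMap.polar Q x y := by
    rw [QuadraticMap.map_add Q, Q.map_smul, Q.map_smul, Q.polar_smul_left,
      Q.polar_smul_right, smul_smul]
  have expand_sub : Q (x - y) = Q x + Q y - QuadraticMap.polar Q x y := by
    rw [sub_eq_add_neg, QuadraticMap.map_add Q, Q.map_neg, Q.polar_neg_right, ← sub_eq_add_neg]
  obtain rfl : b = 1 - a := eq_sub_of_add_eq' hab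
  rw [expand_add, expand_sub]
  module

theorem convexOn_univ_of_quadraticMap_nonneg [PartialOrder R] [PartialOrder N]
    [IsOrderedAddMonoid N] [PosSMulMono R N] {Q : QuadraticMap R M N} (hQ : ∀ x, 0 ≤ Q x) :
    ConvexOn R Set.univ Q := by
  refine ⟨convex_univ, fun x _ y _ a b ha hb hab => ?_⟩
  rw [quadraticMap_smul_add_smul_of_add_eq_one Q hab]
  exact le_add_of_nonneg_right (smul_nonneg ha (smul_nonneg hb (hQ (x - y))))

end QuadraticMap

section IsotropicForm

open Matrix QuadraticMap

/-- `isoQ lam mu` bundled as a quadratic form, so that the convexity criterion for quadratic maps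
applies to it. -/
def isoQForm (lam mu : ℝ) : QuadraticForm ℝ (Matrix (Fin 2) (Fin 2) ℝ) :=
  (lam + 2 * mu) • (sq.comp (entryLinearMap ℝ ℝ 0 0) + sq.comp (entryLinearMap ℝ ℝ 1 1))
    + (2 * lam) • linMulLin (entryLinearMap ℝ ℝ 0 0) (entryLinearMap ℝ ℝ 1 1)
    + mu • sq.comp (entryLinearMap ℝ ℝ 0 1 + entryLinearMap ℝ ℝ 1 0)

/-- The determinant `det2` bundled as a quadratic form, for use together with `isoQForm`. -/
def det2Form : QuadraticForm ℝ (Matrix (Fin 2) (Fin 2) ℝ) :=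
  linMulLin (entryLinearMap ℝ ℝ 0 0) (entryLinearMap ℝ ℝ 1 1)
    - linMulLin (entryLinearMap ℝ ℝ 0 1) (entryLinearMap ℝ ℝ 1 0)

theorem isoQForm_apply (lam mu : ℝ) (A : Matrix (Fin 2) (Fin 2) ℝ) :
    isoQForm lam mu A = isoQ lam mu A := by
  simp [isoQForm, isoQ, pow_two, mul_add]

theorem det2Form_apply (A : Matrix (Fin 2) (Fin 2) ℝ) : det2Form A = det2 A := rfl

theorem isoQ_add_det2_eq_sum_sq (lam mu m : ℝ) (A : Matrix (Fin 2) (Fin 2) ℝ) :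
    isoQ lam mu A + 4 * m * det2 A =
      (lam + mu + m) * (A 0 0 + A 1 1) ^ 2 + (mu - m) * (A 0 0 - A 1 1) ^ 2
        + (mu - m) * (A 0 1 + A 1 0) ^ 2 + m * (A 0 1 - A 1 0) ^ 2 := by
  unfold isoQ det2
  ring

theorem isoQ_add_det2_nonneg {lam mu m : ℝ} (hm : 0 ≤ m) (hmu : m ≤ mu)
    (hlam : 0 ≤ lam + mu + m) (A : Matrix (Fin 2) (Fin 2) ℝ) :
    0 ≤ isoQ lam mu A + 4 * m * det2 A := by
  have _ : 0 ≤ mu - m := sub_nonneg.mpr hmu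
  rw [isoQ_add_det2_eq_sum_sq]
  positivity

theorem convexOn_univ_isoQ_add_det2_of_nonneg {lam mu c : ℝ}
    (h : ∀ A : Matrix (Fin 2) (Fin 2) ℝ, 0 ≤ isoQ lam mu A + c * det2 A) :
    ConvexOn ℝ Set.univ
      (fun A : Matrix (Fin 2) (Fin 2) ℝ => isoQ lam mu A + c * det2 A) := by
  have form_apply : ⇑(isoQForm lam mu + c • det2Form) =
      fun A => isoQ lam mu A + c * det2 A := by
    funext A
    simp [isoQForm_apply, det2Form_apply]
  rw [← form_apply]
  exact convexOn_univ_of_quadraticMap_nonneg fun A => (h A).trans_eq (congrFun form_apply A).symm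

end IsotropicForm

theorem stmt_3_general {lam mu m : ℝ} (hm : 0 ≤ m) (hmu : m ≤ mu) (hlam : 0 ≤ lam + mu + m) :
    (∀ A : Matrix (Fin 2) (Fin 2) ℝ, 0 ≤ isoQ lam mu A + 4 * m * det2 A) ∧
    ConvexOn ℝ Set.univ
      (fun A : Matrix (Fin 2) (Fin 2) ℝ => isoQ lam mu A + 4 * m * det2 A) :=
  have nonneg := isoQ_add_det2_nonneg hm hmu hlam
  ⟨nonneg, convexOn_univ_isoQ_add_det2_of_nonneg nonneg⟩

theorem stmt_3 (lam1 mu1 lam2 mu2 : ℝ)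
    (h1 : 0 < mu1) (h2 : mu1 = -(lam2 + mu2)) (h3 : mu1 < mu2)
    (h4 : 0 < lam1 + mu1) :
    (∀ A : Matrix (Fin 2) (Fin 2) ℝ, 0 ≤ isoQ lam1 mu1 A + 4 * mu1 * det2 A) ∧
    ConvexOn ℝ Set.univ
      (fun A : Matrix (Fin 2) (Fin 2) ℝ => isoQ lam1 mu1 A + 4 * mu1 * det2 A) ∧
    (∀ A : Matrix (Fin 2) (Fin 2) ℝ, 0 ≤ isoQ lam2 mu2 A + 4 * mu1 * det2 A) ∧
    ConvexOn ℝ Set.univ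
      (fun A : Matrix (Fin 2) (Fin 2) ℝ => isoQ lam2 mu2 A + 4 * mu1 * det2 A) := by
  obtain ⟨nonneg₁, convex₁⟩ := stmt_3_general (lam := lam1) h1.le le_rfl (by linarith)
  obtain ⟨nonneg₂, convex₂⟩ := stmt_3_general (lam := lam2) h1.le h3.le (by linarith)
  exact ⟨nonneg₁, convex₁, nonneg₂, convex₂⟩
end

section
/- Let u : ℝ² → ℝ² be continuously differentiable with compact support. Then the determinant of the Jacobian is a null Lagrangian: ∫_{ℝ²} det(Du(x)) dx = 0. -/
open MeasureTheory

/-- The Jacobian matrix of a map `u : ℝ² → ℝ²` at `x`: `(jac u x) i j = ∂ⱼ uⁱ (x)`. -/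
noncomputable def jac (u : (Fin 2 → ℝ) → (Fin 2 → ℝ)) (x : Fin 2 → ℝ) : Matrix (Fin 2) (Fin 2) ℝ :=
  Matrix.of fun i j => fderiv ℝ u x (Pi.single j 1) i

/-!
For small `t` the map `id + t u` is a bijection of the whole space which is the identity off the
closed support `K` of `u`, so it maps `K` onto `K`. The change of variables formula gives
`∫_K det (1 + t Du) = vol K`: this polynomial in `t` is constant near `0`. Its coefficient of degree
`n = dim` is `∫_K det Du`, which vanishes because `n > 0`. Lagrange interpolation writes this
coefficient as a combination of values, so the other coefficients need not be integrated.
-/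

open Set Function Module
open scoped NNReal Finset Polynomial

section DetInterpolation

variable {F : Type*} [Field F] [DecidableEq F]

theorem matrix_det_eq_sum_det_smul_add_div {n : Type*} [Fintype n] [DecidableEq n] {s : Finset F}
    (hs : #s = Fintype.card n + 1) (A B : Matrix n n F) :
    A.det = ∑ t ∈ s, (t • A + B).det / ∏ r ∈ s.erase t, (t - r) := by
  set P : F[X] := ((Polynomial.X : F[X]) • A.map Polynomial.C + B.map Polynomial.C).det
  have eval_P (t : F) : P.eval t = (t • A + B).det := by
    rw [← Polynomial.coe_evalRingHom, RingHom.map_det]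
    congr 1
    ext i j
    simp [mul_comm t]
  have degree_P : P.degree < #s := by
    rw [hs]
    exact Polynomial.degree_le_natDegree.trans_lt
      (by exact_mod_cast Nat.lt_succ_of_le (Polynomial.natDegree_det_X_add_C_le A B))
  calc A.det = P.coeff (#s - 1) := by
        rw [hs, Nat.add_sub_cancel, Polynomial.coeff_det_X_add_C_card]
    _ = ∑ t ∈ s, (t • A + B).det / ∏ r ∈ s.erase t, (t - r) := by
        simpa only [id_eq, eval_P] using Lagrange.coeff_eq_sum (injOn_id _) degree_P

theorem linearMap_det_eq_sum_det_smul_add_div {V : Type*} [AddCommGroup V] [Module F V]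
    [FiniteDimensional F V] {s : Finset F} (hs : #s = finrank F V + 1) (A B : V →ₗ[F] V) :
    LinearMap.det A = ∑ t ∈ s, LinearMap.det (t • A + B) / ∏ r ∈ s.erase t, (t - r) := by
  simp only [← LinearMap.det_toMatrix (finBasis F V), map_add, map_smul]
  exact matrix_det_eq_sum_det_smul_add_div (by rwa [Fintype.card_fin]) _ _

end DetInterpolation

theorem integral_det_eq_zero_of_integral_det_smul_add_one_eq {X 𝕜 V : Type*} [MeasurableSpace X]
    {ν : Measure X} [RCLike 𝕜] [AddCommGroup V] [Module 𝕜 V] [FiniteDimensional 𝕜 V] [Nontrivial V]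
    {A : X → V →ₗ[𝕜] V} {T : Set 𝕜} (hT : T.Infinite) {c : 𝕜}
    (hint : ∀ t ∈ T, Integrable (fun x => LinearMap.det (t • A x + 1)) ν)
    (hc : ∀ t ∈ T, ∫ x, LinearMap.det (t • A x + 1) ∂ν = c) :
    ∫ x, LinearMap.det (A x) ∂ν = 0 := by
  classical
  obtain ⟨s, hsT, hs⟩ := hT.exists_subset_card_eq (finrank 𝕜 V + 1)
  have sum_weights : ∑ t ∈ s, 1 / ∏ r ∈ s.erase t, (t - r) = 0 := by
    simpa [LinearMap.det_zero'', finrank_pos.ne'] using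
      (linearMap_det_eq_sum_det_smul_add_div hs (0 : V →ₗ[𝕜] V) 1).symm
  calc ∫ x, LinearMap.det (A x) ∂ν
      = ∫ x, ∑ t ∈ s, LinearMap.det (t • A x + 1) / ∏ r ∈ s.erase t, (t - r) ∂ν :=
        integral_congr_ae (.of_forall fun x => linearMap_det_eq_sum_det_smul_add_div hs (A x) 1)
    _ = ∑ t ∈ s, c / ∏ r ∈ s.erase t, (t - r) := by
        rw [integral_finsetSum _ fun t ht => (hint t (hsT ht)).div_const _]
        exact Finset.sum_congr rfl fun t ht => by rw [integral_div, hc t (hsT ht)]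
    _ = c * ∑ t ∈ s, 1 / ∏ r ∈ s.erase t, (t - r) := by simp only [Finset.mul_sum, mul_one_div]
    _ = 0 := by rw [sum_weights, mul_zero]

theorem det_add_one_pos_of_norm_lt_one {E : Type*} [NormedAddCommGroup E] [NormedSpace ℝ E]
    [FiniteDimensional ℝ E] {A : E →L[ℝ] E} (hA : ‖A‖ < 1) : 0 < (A + 1).det := by
  have : CompleteSpace E := FiniteDimensional.complete ℝ E
  have det_ne_zero (t : ℝ) (ht : t ∈ Icc (0 : ℝ) 1) : (t • A + 1).det ≠ 0 := by
    have norm_lt : ‖-(t • A)‖ < 1 := by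
      rw [norm_neg, norm_smul, Real.norm_of_nonneg ht.1]
      exact (mul_le_of_le_one_left (norm_nonneg A) ht.2).trans_lt hA
    have isUnit_add_one : IsUnit (t • A + 1) := by
      simpa [add_comm] using isUnit_one_sub_of_norm_lt_one norm_lt
    exact (LinearMap.isUnit_det _
      (isUnit_add_one.map (ContinuousLinearMap.toLinearMapRingHom (R₁ := ℝ) (M₁ := E)))).ne_zero
  have continuous_det : Continuous fun t : ℝ => (t • A + 1).det :=
    ContinuousLinearMap.continuous_det.comp (by fun_prop)
  by_contra! h
  obtain ⟨t, ht, hzero⟩ := intermediate_value_Icc' zero_le_one continuous_det.continuousOn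
    (show (0 : ℝ) ∈ Icc _ _ from ⟨by simpa using h, by simp [ContinuousLinearMap.det]⟩)
  exact det_ne_zero t ht hzero

theorem bijective_add_id_of_lipschitzWith_lt_one {E : Type*} [NormedAddCommGroup E]
    [NormedSpace ℝ E] [CompleteSpace E] {u : E → E} {c : ℝ≥0} (hu : LipschitzWith c u)
    (hc : c < 1) : Bijective (u + id) := by
  have approx_id : ApproximatesLinearOn (u + id) (ContinuousLinearEquiv.refl ℝ E : E →L[ℝ] E)
      univ c :=
    LipschitzOnWith.approximatesLinearOn <| lipschitzOnWith_univ.2 <| by simpa using hu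
  have small : Subsingleton E ∨
      c < ‖((ContinuousLinearEquiv.refl ℝ E).symm : E →L[ℝ] E)‖₊⁻¹ := by
    rcases subsingleton_or_nontrivial E with hE | hE
    · exact .inl hE
    · exact .inr (by simpa using hc)
  exact ⟨injOn_univ.1 (approx_id.injOn small), approx_id.surjective small⟩

theorem image_eq_self_of_bijective_of_eqOn_compl {α : Type*} {f : α → α} (hf : Bijective f)
    {K : Set α} (hK : EqOn f id Kᶜ) : f '' K = K :=
  compl_injective <| by rw [← image_compl_eq hf, hK.image_eq, image_id]

section Measure

variable {E : Type*} [NormedAddCommGroup E] [NormedSpace ℝ E] [FiniteDimensional ℝ E]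
  [MeasurableSpace E] [BorelSpace E] {μ : Measure E} [μ.IsAddHaarMeasure]

theorem integrableOn_det_and_setIntegral_eq_measureReal_image {f : E → E} {f' : E → E →L[ℝ] E}
    {K : Set E} (hK : MeasurableSet K) (hf : ∀ x ∈ K, HasFDerivWithinAt f (f' x) K x)
    (hinj : InjOn f K) (hpos : ∀ x ∈ K, 0 < (f' x).det) (hfin : μ (f '' K) ≠ ⊤) :
    IntegrableOn (fun x => (f' x).det) K μ ∧ ∫ x in K, (f' x).det ∂μ = μ.real (f '' K) := by
  have abs_det : EqOn (fun x => |(f' x).det| • (1 : ℝ)) (fun x => (f' x).det) K := fun x hx => by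
    simp [abs_of_pos (hpos x hx)]
  rw [← integrableOn_congr_fun abs_det hK, ← setIntegral_congr_fun hK abs_det,
    ← integrableOn_image_iff_integrableOn_abs_det_fderiv_smul μ hK hf hinj fun _ => (1 : ℝ),
    ← integral_image_eq_integral_abs_det_fderiv_smul μ hK hf hinj fun _ => (1 : ℝ)]
  exact ⟨integrableOn_const hfin, by simp⟩

theorem integrableOn_and_setIntegral_det_fderiv_add_one {u : E → E} {c : ℝ≥0}
    (hu : LipschitzWith c u) (hc : c < 1) (hdiff : Differentiable ℝ u) {K : Set E}
    (hK : MeasurableSet K) (hfin : μ K ≠ ⊤) (hsupp : support u ⊆ K) :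
    IntegrableOn (fun x => (fderiv ℝ u x + 1).det) K μ ∧
      ∫ x in K, (fderiv ℝ u x + 1).det ∂μ = μ.real K := by
  have : CompleteSpace E := FiniteDimensional.complete ℝ E
  have bij : Bijective (u + id) := bijective_add_id_of_lipschitzWith_lt_one hu hc
  have image_eq : (u + id) '' K = K := image_eq_self_of_bijective_of_eqOn_compl bij fun x hx => by
    simp [notMem_support.1 (notMem_subset hsupp hx)]
  have hasFDeriv (x : E) : HasFDerivAt (u + id) (fderiv ℝ u x + 1) x :=
    (hdiff x).hasFDerivAt.add (hasFDerivAt_id x)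
  have det_pos (x : E) : 0 < (fderiv ℝ u x + 1).det :=
    det_add_one_pos_of_norm_lt_one ((norm_fderiv_le_of_lipschitz ℝ hu).trans_lt hc)
  simpa only [image_eq] using integrableOn_det_and_setIntegral_eq_measureReal_image (μ := μ) hK
    (fun x _ => (hasFDeriv x).hasFDerivWithinAt) bij.injective.injOn (fun x _ => det_pos x)
    (by rwa [image_eq])

theorem stmt_7_general [Nontrivial E] {u : E → E} {C : ℝ≥0} (hu : LipschitzWith C u)
    (hdiff : Differentiable ℝ u) (hfin : μ (tsupport u) ≠ ⊤) :
    ∫ x, (fderiv ℝ u x).det ∂μ = 0 := by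
  have infinite_small : {t : ℝ | ‖t‖₊ * C < 1}.Infinite :=
    infinite_of_mem_nhds 0 <| (isOpen_lt (by fun_prop) continuous_const).mem_nhds (by simp)
  have perturb (t : ℝ) (ht : ‖t‖₊ * C < 1) :
      IntegrableOn (fun x => (t • fderiv ℝ u x + 1).det) (tsupport u) μ ∧
        ∫ x in tsupport u, (t • fderiv ℝ u x + 1).det ∂μ = μ.real (tsupport u) := by
    have lipschitz_smul : LipschitzWith (‖t‖₊ * C) (t • u) := (lipschitzWith_smul t).comp hu
    simpa only [fderiv_const_smul_field, Pi.smul_apply] using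
      integrableOn_and_setIntegral_det_fderiv_add_one (μ := μ) lipschitz_smul ht
        (hdiff.const_smul t) (isClosed_tsupport u).measurableSet hfin
        ((support_const_smul_subset t u).trans (subset_tsupport u))
  have det_eq_zero (x : E) (hx : x ∉ tsupport u) : (fderiv ℝ u x).det = 0 := by
    rw [fderiv_of_notMem_tsupport ℝ hx]
    exact LinearMap.det_zero''
  rw [← setIntegral_eq_integral_of_forall_compl_eq_zero det_eq_zero]
  exact integral_det_eq_zero_of_integral_det_smul_add_one_eq infinite_small
    (fun t ht => (perturb t ht).1) (fun t ht => (perturb t ht).2)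

end Measure

theorem det2_jac (u : (Fin 2 → ℝ) → (Fin 2 → ℝ)) (x : Fin 2 → ℝ) :
    det2 (jac u x) = (fderiv ℝ u x).det := by
  rw [ContinuousLinearMap.det, ← LinearMap.det_toMatrix', Matrix.det_fin_two]
  simp [det2, jac, LinearMap.toMatrix'_apply]

theorem stmt_7 (u : (Fin 2 → ℝ) → (Fin 2 → ℝ))
    (hu : ContDiff ℝ 1 u) (hsupp : HasCompactSupport u) :
    ∫ x : Fin 2 → ℝ, det2 (jac u x) = 0 := by
  obtain ⟨C, hC⟩ := hu.lipschitzWith_of_hasCompactSupport hsupp one_ne_zero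
  simpa only [det2_jac] using
    stmt_7_general hC (hu.differentiable one_ne_zero) hsupp.isCompact.measure_ne_top
end

section
/- (Λ ≥ 0, per realization.) Assume the Gutiérrez conditions and let χ : ℝ² → {0,1} be measurable. Then for every continuously differentiable u : ℝ² → ℝ² with compact support, ∫_{ℝ²} [χ(x)·Q₁(Du(x)) + (1−χ(x))·Q₂(Du(x))] dx ≥ 0. -/
open MeasureTheory

/-!
The argument is the translation method. The Jacobian determinant is a null Lagrangian: a shift can
be moved across an integration by parts, so difference quotients in one direction and derivatives in
another may be exchanged inside the integral, and `∫ det Du = 0` follows for compactly supported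
Lipschitz `u`. Hence the energy does not change when `4 k det A` is added to its density. For
`k = μ₁ = -(λ₂ + μ₂)` the translated form of each phase is a sum of squares with nonnegative
coefficients, so the integrand becomes pointwise nonnegative.
-/

section LineDeriv

open Filter Topology
open scoped NNReal

section NormedField

variable {𝕜 E F : Type*} [NontriviallyNormedField 𝕜] [NormedAddCommGroup F] [NormedSpace 𝕜 F]

lemma lineDeriv_comp_add_right [AddCommGroup E] [Module 𝕜 E] (f : E → F) (a x v : E) :
    lineDeriv 𝕜 (fun y => f (y + a)) x v = lineDeriv 𝕜 f (x + a) v := by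
  simp only [lineDeriv, add_right_comm]

lemma hasCompactSupport_lineDeriv [NormedAddCommGroup E] [NormedSpace 𝕜 E] {f : E → F}
    (hf : HasCompactSupport f) (v : E) : HasCompactSupport fun x => lineDeriv 𝕜 f x v := by
  refine hf.mono' fun x hx => ?_
  contrapose hx
  have hzero : f =ᶠ[𝓝 x] fun _ => 0 := notMem_tsupport_iff_eventuallyEq.1 hx
  rw [Function.notMem_support, hzero.lineDeriv_eq]
  exact deriv_const 0 0

end NormedField

variable {E : Type*} [NormedAddCommGroup E] [NormedSpace ℝ E] [MeasurableSpace E] [BorelSpace E]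
  {μ : Measure E} {f g : E → ℝ} {C D : ℝ≥0}

lemma memLp_lineDeriv_of_hasCompactSupport [IsFiniteMeasureOnCompacts μ]
    (hf : LipschitzWith C f) (hfs : HasCompactSupport f) (v : E) (p : ENNReal) :
    MemLp (fun x => lineDeriv ℝ f x v) p μ :=
  (hf.memLp_lineDeriv v).mono_exponent_of_measure_support_ne_top
    (fun _ => image_eq_zero_of_notMem_tsupport)
    (hasCompactSupport_lineDeriv hfs v).measure_lt_top.ne le_top

variable [FiniteDimensional ℝ E] [μ.IsAddHaarMeasure]

lemma integral_comp_add_mul_lineDeriv (hf : LipschitzWith C f) (hg : LipschitzWith D g)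
    (hgs : HasCompactSupport g) (v a : E) :
    ∫ x, g (x + a) * lineDeriv ℝ f x v ∂μ = -∫ x, f (x - a) * lineDeriv ℝ g x v ∂μ := by
  have hg_shift : LipschitzWith D fun x => g (x + a) := by
    simpa only [mul_one, Function.comp_def] using hg.comp (isometry_add_right a).lipschitz
  have hgs_shift : HasCompactSupport fun x => g (x + a) :=
    hgs.comp_homeomorph (Homeomorph.addRight a)
  calc ∫ x, g (x + a) * lineDeriv ℝ f x v ∂μ
      = ∫ x, lineDeriv ℝ f x v * g (x + a) ∂μ := by simp only [mul_comm]
    _ = ∫ x, lineDeriv ℝ (fun y => g (y + a)) x (-v) * f x ∂μ :=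
        hf.integral_lineDeriv_mul_eq hg_shift hgs_shift v
    _ = -∫ x, f x * lineDeriv ℝ g (x + a) v ∂μ := by
        simp only [lineDeriv_comp_add_right, lineDeriv_neg, neg_mul, integral_neg, mul_comm (f _)]
    _ = -∫ x, f (x - a) * lineDeriv ℝ g x v ∂μ := by
        rw [← integral_add_right_eq_self (fun x => f (x - a) * lineDeriv ℝ g x v) a]
        simp only [add_sub_cancel_right]

lemma integral_sub_mul_lineDeriv (hf : LipschitzWith C f) (hg : LipschitzWith D g)
    (hfs : HasCompactSupport f) (hgs : HasCompactSupport g) (v a : E) :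
    ∫ x, (g (x + a) - g x) * lineDeriv ℝ f x v ∂μ =
      -∫ x, (f (x - a) - f x) * lineDeriv ℝ g x v ∂μ := by
  have hfi : Integrable f μ := hf.continuous.integrable_of_hasCompactSupport hfs
  have hgi : Integrable g μ := hg.continuous.integrable_of_hasCompactSupport hgs
  have hf_deriv := hf.memLp_lineDeriv (μ := μ) v
  have hg_deriv := hg.memLp_lineDeriv (μ := μ) v
  have hzero := integral_comp_add_mul_lineDeriv (μ := μ) hf hg hgs v 0
  simp only [add_zero, sub_zero] at hzero
  simp only [sub_mul]
  rw [integral_sub, integral_sub, integral_comp_add_mul_lineDeriv hf hg hgs, hzero]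
  · ring
  · exact (hfi.comp_sub_right a).smul_of_top_left hg_deriv
  · exact hfi.smul_of_top_left hg_deriv
  · exact (hgi.comp_add_right a).smul_of_top_left hf_deriv
  · exact hgi.smul_of_top_left hf_deriv

lemma integral_lineDeriv_mul_lineDeriv_comm (hf : LipschitzWith C f) (hg : LipschitzWith D g)
    (hfs : HasCompactSupport f) (hgs : HasCompactSupport g) (v w : E) :
    ∫ x, lineDeriv ℝ f x v * lineDeriv ℝ g x w ∂μ =
      ∫ x, lineDeriv ℝ f x w * lineDeriv ℝ g x v ∂μ := by
  have hf_deriv : Integrable (fun x => lineDeriv ℝ f x v) μ :=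
    memLp_one_iff_integrable.1 (memLp_lineDeriv_of_hasCompactSupport hf hfs v 1)
  have hg_deriv : Integrable (fun x => lineDeriv ℝ g x v) μ :=
    memLp_one_iff_integrable.1 (memLp_lineDeriv_of_hasCompactSupport hg hgs v 1)
  have hquotient (t : ℝ) : ∫ x, (t⁻¹ • (g (x + t • w) - g x)) * lineDeriv ℝ f x v ∂μ =
      -∫ x, (t⁻¹ • (f (x + t • -w) - f x)) * lineDeriv ℝ g x v ∂μ := by
    simp only [smul_eq_mul, mul_assoc, integral_const_mul, integral_sub_mul_lineDeriv hf hg hfs hgs,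
      smul_neg, ← sub_eq_add_neg, mul_neg]
  have hleft := hg.integral_inv_smul_sub_mul_tendsto_integral_lineDeriv_mul hf_deriv w
  have hright := (hf.integral_inv_smul_sub_mul_tendsto_integral_lineDeriv_mul hg_deriv (-w)).neg
  simp only [hquotient] at hleft
  calc ∫ x, lineDeriv ℝ f x v * lineDeriv ℝ g x w ∂μ
      = ∫ x, lineDeriv ℝ g x w * lineDeriv ℝ f x v ∂μ := by simp only [mul_comm]
    _ = -∫ x, lineDeriv ℝ f x (-w) * lineDeriv ℝ g x v ∂μ := tendsto_nhds_unique hleft hright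
    _ = ∫ x, lineDeriv ℝ f x w * lineDeriv ℝ g x v ∂μ := by
        simp only [lineDeriv_neg, neg_mul, integral_neg, neg_neg]

end LineDeriv

section Jacobian

open scoped NNReal

variable {u : (Fin 2 → ℝ) → (Fin 2 → ℝ)} {C : ℝ≥0}

lemma ae_jac_apply_eq_lineDeriv (hu : LipschitzWith C u) (i j : Fin 2) :
    (fun x => jac u x i j) =ᵐ[volume] fun x => lineDeriv ℝ (fun y => u y i) x (Pi.single j 1) := by
  filter_upwards [hu.ae_differentiableAt] with x hx
  rw [(differentiableAt_pi.1 hx i).lineDeriv_eq_fderiv, jac, Matrix.of_apply, fderiv_apply hx]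
  rfl

lemma memLp_jac_apply (hu : LipschitzWith C u) (hsupp : HasCompactSupport u) (i j : Fin 2)
    (p : ENNReal) : MemLp (fun x => jac u x i j) p :=
  (memLp_congr_ae (ae_jac_apply_eq_lineDeriv hu i j)).2 <|
    memLp_lineDeriv_of_hasCompactSupport ((LipschitzWith.eval i).comp hu)
      (hsupp.comp_left (g := fun y : Fin 2 → ℝ => y i) rfl) _ p

lemma integrable_jac_apply_mul_jac_apply (hu : LipschitzWith C u) (hsupp : HasCompactSupport u)
    (i j k l : Fin 2) : Integrable fun x => jac u x i j * jac u x k l :=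
  (memLp_jac_apply hu hsupp i j 2).integrable_mul (memLp_jac_apply hu hsupp k l 2)

lemma integrable_det_jac (hu : LipschitzWith C u) (hsupp : HasCompactSupport u) :
    Integrable fun x => (jac u x).det := by
  simp only [Matrix.det_fin_two]
  exact (integrable_jac_apply_mul_jac_apply hu hsupp 0 0 1 1).sub
    (integrable_jac_apply_mul_jac_apply hu hsupp 0 1 1 0)

lemma integral_det_jac (hu : LipschitzWith C u) (hsupp : HasCompactSupport u) :
    ∫ x, (jac u x).det = 0 := by
  have hlip (i : Fin 2) : LipschitzWith (1 * C) fun x => u x i := (LipschitzWith.eval i).comp hu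
  have hcpt (i : Fin 2) : HasCompactSupport fun x => u x i :=
    hsupp.comp_left (g := fun y : Fin 2 → ℝ => y i) rfl
  have hprod (j k : Fin 2) : ∫ x, jac u x 0 j * jac u x 1 k =
      ∫ x, lineDeriv ℝ (fun y => u y 0) x (Pi.single j 1) *
        lineDeriv ℝ (fun y => u y 1) x (Pi.single k 1) :=
    integral_congr_ae ((ae_jac_apply_eq_lineDeriv hu 0 j).mul (ae_jac_apply_eq_lineDeriv hu 1 k))
  simp only [Matrix.det_fin_two]
  rw [integral_sub (integrable_jac_apply_mul_jac_apply hu hsupp 0 0 1 1)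
      (integrable_jac_apply_mul_jac_apply hu hsupp 0 1 1 0), sub_eq_zero, hprod, hprod]
  exact integral_lineDeriv_mul_lineDeriv_comm (hlip 0) (hlip 1) (hcpt 0) (hcpt 1) _ _

lemma integral_nonneg_of_const_mul_det_jac_le (hu : LipschitzWith C u)
    (hsupp : HasCompactSupport u) {F : (Fin 2 → ℝ) → ℝ} (hF : Integrable F) {c : ℝ}
    (hle : ∀ᵐ x, c * (jac u x).det ≤ F x) : 0 ≤ ∫ x, F x :=
  calc 0 = ∫ x, c * (jac u x).det := by
        rw [integral_const_mul, integral_det_jac hu hsupp, mul_zero]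
    _ ≤ ∫ x, F x := integral_mono_ae ((integrable_det_jac hu hsupp).const_mul c) hF hle

end Jacobian

section IsotropicElasticity

open scoped NNReal

lemma isoQ_add_const_mul_det (lam mu k : ℝ) (A : Matrix (Fin 2) (Fin 2) ℝ) :
    isoQ lam mu A + 4 * k * A.det =
      (lam + mu + k) * (A 0 0 + A 1 1) ^ 2 + (mu - k) * (A 0 0 - A 1 1) ^ 2
        + (mu - k) * (A 0 1 + A 1 0) ^ 2 + k * (A 0 1 - A 1 0) ^ 2 := by
  rw [isoQ, Matrix.det_fin_two]
  ring

lemma const_mul_det_le_isoQ {lam mu k : ℝ} (hk : 0 ≤ k) (hmu : k ≤ mu)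
    (hbulk : 0 ≤ lam + mu + k) (A : Matrix (Fin 2) (Fin 2) ℝ) :
    -(4 * k) * A.det ≤ isoQ lam mu A := by
  have : 0 ≤ mu - k := sub_nonneg.2 hmu
  have hnonneg : 0 ≤ isoQ lam mu A + 4 * k * A.det := by
    rw [isoQ_add_const_mul_det]
    positivity
  linarith

lemma isoQ_convex_combination (t lam₁ mu₁ lam₂ mu₂ : ℝ) (A : Matrix (Fin 2) (Fin 2) ℝ) :
    isoQ (t * lam₁ + (1 - t) * lam₂) (t * mu₁ + (1 - t) * mu₂) A =
      t * isoQ lam₁ mu₁ A + (1 - t) * isoQ lam₂ mu₂ A := by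
  simp only [isoQ]
  ring

variable {u : (Fin 2 → ℝ) → (Fin 2 → ℝ)} {C : ℝ≥0}

lemma integrable_isoQ_jac (hu : LipschitzWith C u) (hsupp : HasCompactSupport u)
    {lam mu : (Fin 2 → ℝ) → ℝ} (hlam : MemLp lam ⊤) (hmu : MemLp mu ⊤) :
    Integrable fun x => isoQ (lam x) (mu x) (jac u x) := by
  have hprod := integrable_jac_apply_mul_jac_apply hu hsupp
  have hdiag : Integrable fun x => jac u x 0 0 ^ 2 + jac u x 1 1 ^ 2 := by
    simpa only [sq] using (hprod 0 0 0 0).fun_add (hprod 1 1 1 1)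
  have hshear : Integrable fun x => (jac u x 0 1 + jac u x 1 0) ^ 2 :=
    ((memLp_jac_apply hu hsupp 0 1 2).add (memLp_jac_apply hu hsupp 1 0 2)).integrable_sq
  exact ((hdiag.smul_of_top_right (hlam.add (hmu.const_mul 2))).add
    ((hprod 0 0 1 1).smul_of_top_right (hlam.const_mul 2))).add (hshear.smul_of_top_right hmu)

lemma integral_isoQ_jac_nonneg (hu : LipschitzWith C u) (hsupp : HasCompactSupport u)
    {lam mu : (Fin 2 → ℝ) → ℝ} (hlam : MemLp lam ⊤) (hmu : MemLp mu ⊤) {k : ℝ} (hk : 0 ≤ k)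
    (hshear : ∀ᵐ x, k ≤ mu x) (hbulk : ∀ᵐ x, 0 ≤ lam x + mu x + k) :
    0 ≤ ∫ x, isoQ (lam x) (mu x) (jac u x) := by
  refine integral_nonneg_of_const_mul_det_jac_le hu hsupp
    (integrable_isoQ_jac hu hsupp hlam hmu) (c := -(4 * k)) ?_
  filter_upwards [hshear, hbulk] with x hx_shear hx_bulk
  exact const_mul_det_le_isoQ hk hx_shear hx_bulk _

theorem stmt_8_general {lam₁ mu₁ lam₂ mu₂ k : ℝ} (hk : 0 ≤ k) (hmu₁ : k ≤ mu₁) (hmu₂ : k ≤ mu₂)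
    (hbulk₁ : 0 ≤ lam₁ + mu₁ + k) (hbulk₂ : 0 ≤ lam₂ + mu₂ + k)
    {χ : (Fin 2 → ℝ) → ℝ} (hχmeas : AEStronglyMeasurable χ) (hχ : ∀ᵐ x, χ x ∈ Set.Icc 0 1)
    (hu : LipschitzWith C u) (hsupp : HasCompactSupport u) :
    0 ≤ ∫ x, (χ x * isoQ lam₁ mu₁ (jac u x) + (1 - χ x) * isoQ lam₂ mu₂ (jac u x)) := by
  have hχ_top : MemLp χ ⊤ := memLp_top_of_bound hχmeas 1 <| by
    filter_upwards [hχ] with x hx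
    simpa only [Real.norm_of_nonneg hx.1] using hx.2
  have hmix (a b : ℝ) : MemLp (fun x => χ x * a + (1 - χ x) * b) ⊤ :=
    (hχ_top.mul_const a).add (((memLp_top_const 1).sub hχ_top).mul_const b)
  simp only [← isoQ_convex_combination]
  refine integral_isoQ_jac_nonneg hu hsupp (hmix _ _) (hmix _ _) hk ?_ ?_
  · filter_upwards [hχ] with x ⟨hx₀, hx₁⟩
    linarith [mul_nonneg hx₀ (sub_nonneg.2 hmu₁),
      mul_nonneg (sub_nonneg.2 hx₁) (sub_nonneg.2 hmu₂)]
  · filter_upwards [hχ] with x ⟨hx₀, hx₁⟩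
    linarith [mul_nonneg hx₀ hbulk₁, mul_nonneg (sub_nonneg.2 hx₁) hbulk₂]

end IsotropicElasticity

theorem stmt_8 (lam1 mu1 lam2 mu2 : ℝ)
    (h1 : 0 < mu1) (h2 : mu1 = -(lam2 + mu2)) (h3 : mu1 < mu2)
    (h4 : 0 < lam1 + mu1)
    (χ : (Fin 2 → ℝ) → ℝ) (hχmeas : Measurable χ) (hχ : ∀ x, χ x = 0 ∨ χ x = 1)
    (u : (Fin 2 → ℝ) → (Fin 2 → ℝ))
    (hu : ContDiff ℝ 1 u) (hsupp : HasCompactSupport u) :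
    0 ≤ ∫ x : Fin 2 → ℝ,
      (χ x * isoQ lam1 mu1 (jac u x) + (1 - χ x) * isoQ lam2 mu2 (jac u x)) := by
  obtain ⟨C, hC⟩ := hu.lipschitzWith_of_hasCompactSupport hsupp one_ne_zero
  exact stmt_8_general h1.le le_rfl h3.le (by linarith) (by linarith)
    hχmeas.aestronglyMeasurable (.of_forall fun x => by rcases hχ x with h | h <;> simp [h])
    hC hsupp
end

section
/- Let U ⊆ ℝ² be open and connected and let ψ : ℝ² → ℝ be twice continuously differentiable on U. Suppose that on U the mixed second partial derivatives vanish, ∂₁∂₂ψ = ∂₂∂₁ψ = 0, and the pure second partial derivatives agree, ∂₁∂₁ψ = ∂₂∂₂ψ. Then there exist real constants a, b, c, d such that ψ(y) = a(y₁² + y₂²) + b y₁ + c y₂ + d for all y ∈ U. -/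
/-- The `j`-th partial derivative of `ψ : ℝ² → ℝ` (direction `e_j`). -/
noncomputable def pderiv2 (j : Fin 2) (ψ : (Fin 2 → ℝ) → ℝ) (x : Fin 2 → ℝ) : ℝ :=
  fderiv ℝ ψ x (Pi.single j 1)


/-!
Suppose the derivative of `G` on a convex open set is `c y • B`, where the linear map `B` has rank
at least two. Given a vector `v`, compose `G` with the quotient map of `F` by the line spanned by
`B v`: the derivative of the composite kills `v`, so the composite and hence also its derivative are
invariant under translation by `v`. As `B` does not vanish modulo a line, `c` itself is invariant
under translation by `v`. Since `v` was arbitrary, `c` is constant.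

The hypotheses on the second partial derivatives say that the derivative of `fderiv ℝ ψ` is such a
multiple of the standard scalar product. Thus its coefficient is constant, and integrating twice
shows that `ψ` is a quadratic polynomial.
-/

open Filter Topology

section Proportional

variable {E F : Type*} [NormedAddCommGroup E] [NormedSpace ℝ E] [NormedAddCommGroup F]
  [NormedSpace ℝ F]

lemma apply_add_eq_of_hasFDerivAt_apply_eq_zero {s : Set E} (hs : Convex ℝ s) {f : E → F}
    {f' : E → E →L[ℝ] F} (hf : ∀ y ∈ s, HasFDerivAt f (f' y) y) {v : E}
    (hv : ∀ y ∈ s, f' y v = 0) {x : E} (hx : x ∈ s) (hxv : x + v ∈ s) : f (x + v) = f x := by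
  have hderiv (t : ℝ) (ht : t ∈ Set.Icc (0 : ℝ) 1) :
      HasDerivAt (fun t : ℝ => f (x + t • v)) 0 t := by
    have hmem : x + t • v ∈ s := hs.add_smul_mem hx hxv ht
    have hline : HasDerivAt (fun t : ℝ => x + t • v) v t := by
      simpa using ((hasDerivAt_id t).smul_const v).const_add x
    simpa only [hv _ hmem] using! (hf _ hmem).comp_hasDerivAt t hline
  simpa using constant_of_has_deriv_right_zero
    (fun t ht => (hderiv t ht).continuousAt.continuousWithinAt)
    (fun t ht => (hderiv t (Set.Ico_subset_Icc_self ht)).hasDerivWithinAt) 1 (by simp)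

lemma hasFDerivAt_add_eq_of_apply_eq_zero {s : Set E} (hs : Convex ℝ s) (hsopen : IsOpen s)
    {f : E → F} {f' : E → E →L[ℝ] F} (hf : ∀ y ∈ s, HasFDerivAt f (f' y) y) {v : E}
    (hv : ∀ y ∈ s, f' y v = 0) {x : E} (hx : x ∈ s) (hxv : x + v ∈ s) : f' (x + v) = f' x := by
  have htranslate : (fun y => f (y + v)) =ᶠ[𝓝 x] f := by
    filter_upwards [hsopen.mem_nhds hx,
      (continuous_add_const v).continuousAt (hsopen.mem_nhds hxv)] with y hy hyv
    exact apply_add_eq_of_hasFDerivAt_apply_eq_zero hs hf hv hy hyv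
  exact ((hasFDerivAt_comp_add_right v).2 (hf _ hxv)).unique
    ((hf x hx).congr_of_eventuallyEq htranslate)

lemma mkQL_span_singleton_comp_ne_zero {B : E →L[ℝ] F} (hB : 1 < (B : E →ₗ[ℝ] F).rank) (w : F) :
    (Submodule.span ℝ {w}).mkQL ∘L B ≠ 0 := by
  intro hzero
  have hrange : (B : E →ₗ[ℝ] F).range ≤ Submodule.span ℝ {w} := by
    rintro _ ⟨v, rfl⟩
    simpa using DFunLike.congr_fun hzero v
  refine hB.not_ge ((Submodule.rank_mono hrange).trans ?_)
  simpa using rank_span_le (R := ℝ) {w}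

lemma coeff_add_eq_of_hasFDerivAt_smul {s : Set E} (hs : Convex ℝ s) (hsopen : IsOpen s)
    {B : E →L[ℝ] F} (hB : 1 < (B : E →ₗ[ℝ] F).rank) {G : E → F} {c : E → ℝ}
    (hG : ∀ y ∈ s, HasFDerivAt G (c y • B) y) {x v : E} (hx : x ∈ s) (hxv : x + v ∈ s) :
    c (x + v) = c x := by
  let q := (Submodule.span ℝ {B v}).mkQL
  have : IsClosed (Submodule.span ℝ {B v} : Set F) := Submodule.closed_of_finiteDimensional _
  have hqG (y : E) (hy : y ∈ s) : HasFDerivAt (q ∘ G) (c y • (q ∘L B)) y := by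
    simpa only [ContinuousLinearMap.comp_smul] using q.hasFDerivAt.comp y (hG y hy)
  have hqBv : q (B v) = 0 := by simp [q]
  have hcoeff : c (x + v) • (q ∘L B) = c x • (q ∘L B) :=
    hasFDerivAt_add_eq_of_apply_eq_zero hs hsopen hqG (fun y _ => by simp [hqBv]) hx hxv
  exact smul_left_injective ℝ (mkQL_span_singleton_comp_ne_zero hB (B v)) hcoeff

lemma coeff_eq_of_hasFDerivAt_smul {U : Set E} (hUopen : IsOpen U) (hU : IsPreconnected U)
    {B : E →L[ℝ] F} (hB : 1 < (B : E →ₗ[ℝ] F).rank) {G : E → F} {c : E → ℝ}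
    (hG : ∀ y ∈ U, HasFDerivAt G (c y • B) y) {x y : E} (hx : x ∈ U) (hy : y ∈ U) :
    c x = c y := by
  refine hU.induction₂ (fun x y => c x = c y) (fun z hz => ?_) (fun _ _ _ _ _ _ => Eq.trans)
    (fun _ _ _ _ => Eq.symm) hx hy
  obtain ⟨r, hr, hball⟩ := Metric.isOpen_iff.1 hUopen z hz
  filter_upwards [mem_nhdsWithin_of_mem_nhds (Metric.ball_mem_nhds z hr)] with w hw
  simpa using (coeff_add_eq_of_hasFDerivAt_smul (convex_ball z r) Metric.isOpen_ball hB
    (fun y hy => hG y (hball hy)) (Metric.mem_ball_self hr) (v := w - z) (by simpa using hw)).symm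

lemma exists_eqOn_smul_add_of_hasFDerivAt_smul {U : Set E} (hUopen : IsOpen U)
    (hU : IsPreconnected U) {B : E →L[ℝ] F} (hB : 1 < (B : E →ₗ[ℝ] F).rank) {G : E → F}
    {c : E → ℝ} (hG : ∀ y ∈ U, HasFDerivAt G (c y • B) y) :
    ∃ (a : ℝ) (b : F), U.EqOn c (fun _ => a) ∧ U.EqOn G (fun y => a • B y + b) := by
  rcases U.eq_empty_or_nonempty with rfl | ⟨x, hx⟩
  · exact ⟨0, 0, Set.eqOn_empty _ _, Set.eqOn_empty _ _⟩
  have hc : U.EqOn c (fun _ => c x) := fun y hy =>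
    coeff_eq_of_hasFDerivAt_smul hUopen hU hB hG hy hx
  obtain ⟨b, hb⟩ := hUopen.exists_eq_add_of_fderiv_eq hU
    (fun y hy => (hG y hy).differentiableAt.differentiableWithinAt)
    (c x • B).differentiable.differentiableOn
    (fun y hy => by rw [(hG y hy).fderiv, ContinuousLinearMap.fderiv, hc hy])
  exact ⟨c x, b, hc, hb⟩

lemma exists_eqOn_quadratic_of_hasFDerivAt_smul {U : Set E} (hUopen : IsOpen U)
    (hU : IsPreconnected U) {B : E →L[ℝ] E →L[ℝ] F}
    (hB : 1 < (B : E →ₗ[ℝ] E →L[ℝ] F).rank) {ψ : E → F} {ψ' : E → E →L[ℝ] F} {c : E → ℝ}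
    (hψ : ∀ y ∈ U, HasFDerivAt ψ (ψ' y) y) (hψ' : ∀ y ∈ U, HasFDerivAt ψ' (c y • B) y) :
    ∃ (a : ℝ) (L : E →L[ℝ] F) (d : F), U.EqOn ψ (fun y => a • B y y + L y + d) := by
  obtain ⟨a, L, hc, hψ'eq⟩ := exists_eqOn_smul_add_of_hasFDerivAt_smul hUopen hU hB hψ'
  have hsymm (y : E) (hy : y ∈ U) (v w : E) : a • B v w = a • B w v := by
    have := second_derivative_symmetric_of_eventually
      (eventually_of_mem (hUopen.mem_nhds hy) hψ) (hψ' y hy) v w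
    simpa [hc hy] using this
  have hquadratic (y : E) (hy : y ∈ U) :
      HasFDerivAt (fun y => (a / 2) • B y y + L y) (ψ' y) y := by
    refine (((B.hasFDerivAt.clm_apply (hasFDerivAt_id y)).const_smul (a / 2)).add
      L.hasFDerivAt).congr_fderiv ?_
    ext v
    have hsum : (a / 2) • B y v + (a / 2) • B v y = a • B y v := by
      linear_combination (norm := module) (1 / 2 : ℝ) • hsymm y hy v y
    simpa [hψ'eq hy] using hsum
  obtain ⟨d, hd⟩ := hUopen.exists_eq_add_of_fderiv_eq hU
    (fun y hy => (hψ y hy).differentiableAt.differentiableWithinAt)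
    (fun y hy => (hquadratic y hy).differentiableAt.differentiableWithinAt)
    (fun y hy => (hψ y hy).fderiv.trans (hquadratic y hy).fderiv.symm)
  exact ⟨a / 2, L, d, hd⟩

end Proportional

section Coordinates

lemma one_lt_rank_dotProductBilin {ι : Type*} [Fintype ι] [Nontrivial ι] :
    1 < ((dotProductBilin ℝ ℝ : (ι → ℝ) →ₗ[ℝ] (ι → ℝ) →ₗ[ℝ] ℝ).toContinuousBilinearMap :
      (ι → ℝ) →ₗ[ℝ] (ι → ℝ) →L[ℝ] ℝ).rank := by
  rw [LinearMap.rank, rank_range_of_injective, rank_fun']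
  · exact_mod_cast Fintype.one_lt_card
  intro v w hvw
  exact dotProduct_eq v w fun u => DFunLike.congr_fun hvw u

variable {ι : Type*} [DecidableEq ι]

/-- The `i`-th partial derivative of a function on `ι → ℝ`, the analogue of `pderiv2` for an
arbitrary set of coordinates. Like `fderiv`, it is `0` where the function is not differentiable. -/
noncomputable def partialDeriv (i : ι) (f : (ι → ℝ) → ℝ) (x : ι → ℝ) : ℝ :=
  fderiv ℝ f x (Pi.single i 1)

lemma partialDeriv_partialDeriv [Finite ι] {ψ : (ι → ℝ) → ℝ} {y : ι → ℝ}
    (hψ : DifferentiableAt ℝ (fderiv ℝ ψ) y) (i j : ι) :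
    partialDeriv i (partialDeriv j ψ) y =
      fderiv ℝ (fderiv ℝ ψ) y (Pi.single i 1) (Pi.single j 1) := by
  have := Fintype.ofFinite ι
  change fderiv ℝ (fun z => fderiv ℝ ψ z (Pi.single j 1)) y (Pi.single i 1) = _
  rw [fderiv_clm_apply hψ (differentiableAt_const _)]
  simp

variable [Fintype ι]

lemma fderiv_fderiv_eq_smul_dotProductBilin {ψ : (ι → ℝ) → ℝ} {y : ι → ℝ}
    (hψ : DifferentiableAt ℝ (fderiv ℝ ψ) y)
    (hmixed : ∀ i j, i ≠ j → partialDeriv i (partialDeriv j ψ) y = 0) {k : ι}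
    (hpure : ∀ i, partialDeriv i (partialDeriv i ψ) y = partialDeriv k (partialDeriv k ψ) y) :
    fderiv ℝ (fderiv ℝ ψ) y =
      partialDeriv k (partialDeriv k ψ) y • (dotProductBilin ℝ ℝ).toContinuousBilinearMap := by
  apply ContinuousLinearMap.coe_injective
  refine LinearMap.pi_ext' fun i => LinearMap.ext_ring ?_
  apply ContinuousLinearMap.coe_injective
  refine LinearMap.pi_ext' fun j => LinearMap.ext_ring ?_
  have hij := partialDeriv_partialDeriv hψ i j
  obtain rfl | hne := eq_or_ne i j
  · rw [hpure] at hij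
    simp [← hij]
  · rw [hmixed i j hne] at hij
    simp [← hij, hne]

theorem stmt_13_general [Nontrivial ι] {U : Set (ι → ℝ)} (hUopen : IsOpen U)
    (hU : IsPreconnected U) {ψ : (ι → ℝ) → ℝ} (hψ : DifferentiableOn ℝ ψ U)
    (hψ' : DifferentiableOn ℝ (fderiv ℝ ψ) U)
    (hmixed : ∀ y ∈ U, ∀ i j, i ≠ j → partialDeriv i (partialDeriv j ψ) y = 0)
    (hpure : ∀ y ∈ U, ∀ i j,
      partialDeriv i (partialDeriv i ψ) y = partialDeriv j (partialDeriv j ψ) y) :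
    ∃ (a : ℝ) (b : ι → ℝ) (d : ℝ), ∀ y ∈ U,
      ψ y = a * ∑ i, y i ^ 2 + ∑ i, b i * y i + d := by
  obtain ⟨k⟩ : Nonempty ι := inferInstance
  have hHessian (y : ι → ℝ) (hy : y ∈ U) : HasFDerivAt (fderiv ℝ ψ)
      (partialDeriv k (partialDeriv k ψ) y • (dotProductBilin ℝ ℝ).toContinuousBilinearMap) y := by
    have hdiff := hψ'.differentiableAt (hUopen.mem_nhds hy)
    rw [← fderiv_fderiv_eq_smul_dotProductBilin hdiff (hmixed y hy) fun i => hpure y hy i k]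
    exact hdiff.hasFDerivAt
  obtain ⟨a, L, d, hquadratic⟩ := exists_eqOn_quadratic_of_hasFDerivAt_smul hUopen hU
    one_lt_rank_dotProductBilin
    (fun y hy => (hψ.differentiableAt (hUopen.mem_nhds hy)).hasFDerivAt) hHessian
  refine ⟨a, fun i => L (Pi.single i 1), d, fun y hy => ?_⟩
  have hL : L y = ∑ i, L (Pi.single i 1) * y i := by
    conv_lhs => rw [pi_eq_sum_univ' y]
    simp [mul_comm]
  simp [hquadratic hy, hL, dotProduct, sq]

end Coordinates

theorem stmt_13 (U : Set (Fin 2 → ℝ)) (hUopen : IsOpen U) (hUconn : IsConnected U)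
    (ψ : (Fin 2 → ℝ) → ℝ) (hψ : ContDiffOn ℝ 2 ψ U)
    (h12 : ∀ y ∈ U, pderiv2 0 (pderiv2 1 ψ) y = 0)
    (h21 : ∀ y ∈ U, pderiv2 1 (pderiv2 0 ψ) y = 0)
    (h1122 : ∀ y ∈ U, pderiv2 0 (pderiv2 0 ψ) y = pderiv2 1 (pderiv2 1 ψ) y) :
    ∃ a b c d : ℝ, ∀ y ∈ U,
      ψ y = a * ((y 0) ^ 2 + (y 1) ^ 2) + b * y 0 + c * y 1 + d := by
  obtain ⟨a, b, d, h⟩ := stmt_13_general hUopen hUconn.isPreconnected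
    (hψ.differentiableOn two_ne_zero)
    ((hψ.fderiv_of_isOpen (m := 1) hUopen (by norm_num)).differentiableOn one_ne_zero)
    (fun y hy => by simpa [Fin.forall_fin_two] using ⟨h12 y hy, h21 y hy⟩)
    (fun y hy => by simpa [Fin.forall_fin_two] using ⟨h1122 y hy, (h1122 y hy).symm⟩)
  exact ⟨a, b 0, b 1, d, by simpa [Fin.sum_univ_two, add_assoc] using h⟩
end

section
/- (Covariance of the discrete Bloch transform of an N-stationary field.) Let d ≥ 1, N ≥ 1, and let Ω be a set equipped with an additive action of ℤ^d, written z ↦ T_z with T₀ = id and T_{y+z} = T_y ∘ T_z. Let q : ℝ^d × Ω → ℂ^d be N-stationary, i.e. q(x+Nz, ω) = q(x, T_{Nz}ω) for all z ∈ ℤ^d. Let γ' ∈ ℝ^d, let γ ∈ (2π/N)·ℤ^d, set v(x,ω) := e^{i⟨γ',x⟩} q(x,ω), and define ṽ_γ(x,ω) := Σ_{z ∈ {0,…,N−1}^d} e^{−i⟨γ+γ',z⟩} v(x+z, T_{−z}ω). Then for every y ∈ ℤ^d, every x ∈ ℝ^d and every ω ∈ Ω: ṽ_γ(x+y, ω)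 = e^{i⟨γ+γ',y⟩} ṽ_γ(x, T_y ω). -/
open scoped BigOperators

/-- The discrete Bloch transform over the cell `{0,…,N−1}^d`:
`ṽ_γ(x,ω) = Σ_{z ∈ {0,…,N−1}^d} e^{−i⟨γtot,z⟩} v(x+z, T_{−z}ω)`. -/
noncomputable def discreteBloch {d N : ℕ} {Ω : Type*} (T : (Fin d → ℤ) → Ω → Ω)
    (v : (Fin d → ℝ) → Ω → (Fin d → ℂ)) (γtot : Fin d → ℝ)
    (x : Fin d → ℝ) (ω : Ω) : Fin d → ℂ :=
  ∑ z : Fin d → Fin N,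
    Complex.exp (-Complex.I * ((∑ i, γtot i * ((z i : ℕ) : ℝ) : ℝ) : ℂ)) •
      v (x + fun i => (((z i : ℕ) : ℝ))) (T (-fun i => ((z i : ℕ) : ℤ)) ω)

/-!
Let `z ∈ ℤ^d` act on pairs by `(x, ω) ↦ (x + z, T_{-z} ω)`, and let `χ` be the character
`e^{i⟨γ+γ',·⟩}` of `ℤ^d`. Since `γ` is dual to `Nℤ^d`, stationarity of `q` says exactly that
`v (h · p) = χ(h) v(p)` for `h ∈ Nℤ^d`. Hence `z ↦ χ(-z) v (z · p)` descends to `ℤ^d / Nℤ^d`, and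
the Bloch transform is its sum over this quotient. Reindexing that sum by a translation shows that
the transform satisfies `ṽ (y · p) = χ(y) ṽ(p)` for all `y ∈ ℤ^d`; take `p = (x, T_y ω)`.
-/

section TwistedSum

variable {ι L Q R X E : Type*} [Fintype ι]

theorem sum_add_right_of_bijective_comp [AddZeroClass L] [AddGroup Q] [AddCommMonoid E]
    (π : L →+ Q) {s : ι → L} (hs : Function.Bijective (π ∘ s)) {F : L → E}
    (hF : ∀ a b, π a = π b → F a = F b) (y : L) :
    ∑ i, F (s i + y) = ∑ i, F (s i) := by
  let e := Equiv.ofBijective (π ∘ s) hs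
  refine Fintype.sum_equiv ((e.trans (Equiv.addRight (π y))).trans e.symm) _ _ fun i => hF _ _ ?_
  calc π (s i + y) = e i + π y := map_add π _ _
    _ = e (e.symm (e i + π y)) := (e.apply_symm_apply _).symm

variable [AddGroup L] [Monoid R] {χ : AddChar L R} {S : L → X → X} {f : X → E}

theorem twist_eq_of_map_eq [AddGroup Q] [MulAction R E] (hS : ∀ a b, S (a + b) = S a ∘ S b)
    {π : L →+ Q} (hf : ∀ h, π h = 0 → ∀ p, f (S h p) = χ h • f p) {a b : L} (hab : π a = π b)
    (p : X) :
    χ (-a) • f (S a p) = χ (-b) • f (S b p) := by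
  have hker : π (a - b) = 0 := by rw [map_sub, hab, sub_self]
  calc χ (-a) • f (S a p) = χ (-a) • f (S (a - b) (S b p)) := by
        rw [← Function.comp_apply (f := S _), ← hS, sub_add_cancel]
    _ = χ (-a + (a - b)) • f (S b p) := by
        rw [hf _ hker, smul_smul, AddChar.map_add_eq_mul]
    _ = χ (-b) • f (S b p) := by rw [sub_eq_add_neg, neg_add_cancel_left]

variable [AddCommMonoid E] [DistribMulAction R E]

/-- The sum of `χ(-z) f(S_z p)` over the points `z = s i`. When these represent the cosets of a
subgroup along which `f` transforms by the character `χ`, this is, up to normalization, the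
projection of `f` onto the functions that transform by `χ` along all of `L`. -/
def twistedSum (χ : AddChar L R) (S : L → X → X) (s : ι → L) (f : X → E) (p : X) : E :=
  ∑ i, χ (-s i) • f (S (s i) p)

theorem twistedSum_translate [AddGroup Q] (hS : ∀ a b, S (a + b) = S a ∘ S b) {π : L →+ Q}
    {s : ι → L} (hs : Function.Bijective (π ∘ s)) (hf : ∀ h, π h = 0 → ∀ p, f (S h p) = χ h • f p)
    (y : L) (p : X) :
    twistedSum χ S s f (S y p) = χ y • twistedSum χ S s f p := by
  calc twistedSum χ S s f (S y p)
      = ∑ i, χ y • χ (-(s i + y)) • f (S (s i + y) p) := by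
        refine Finset.sum_congr rfl fun i _ => ?_
        rw [hS, Function.comp_apply, smul_smul, ← AddChar.map_add_eq_mul, neg_add_rev,
          add_neg_cancel_left]
    _ = χ y • ∑ i, χ (-(s i + y)) • f (S (s i + y) p) := Finset.smul_sum.symm
    _ = χ y • twistedSum χ S s f p := by
        rw [sum_add_right_of_bijective_comp π hs (F := fun z => χ (-z) • f (S z p))
          fun a b hab => twist_eq_of_map_eq hS hf hab p]
        rfl

end TwistedSum

section Cell

variable {ι : Type*} {N : ℕ}

/-- A point of the cell `{0,…,N−1}^ι`, seen in the lattice `ℤ^ι`. -/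
def cellPoint (z : ι → Fin N) : ι → ℤ := fun i => ((z i : ℕ) : ℤ)

/-- Reduction `ℤ^ι → (ℤ/N)^ι`, which serves as the quotient map of `ℤ^ι` by `Nℤ^ι`. -/
def latticeMod (ι : Type*) (N : ℕ) : (ι → ℤ) →+ (ι → ZMod N) :=
  (Int.castAddHom (ZMod N)).compLeft ι

theorem exists_eq_mul_of_latticeMod_eq_zero {z : ι → ℤ} (hz : latticeMod ι N z = 0) :
    ∃ w : ι → ℤ, z = fun i => (N : ℤ) * w i := by
  have hdvd (i : ι) : (N : ℤ) ∣ z i := (ZMod.intCast_zmod_eq_zero_iff_dvd _ _).mp (congrFun hz i)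
  choose w hw using hdvd
  exact ⟨w, funext hw⟩

theorem natCast_fin_zmod_bijective [NeZero N] :
    Function.Bijective fun a : Fin N => ((a : ℕ) : ZMod N) := by
  constructor
  · intro a b hab
    simpa only [ZMod.val_cast_of_lt a.isLt, ZMod.val_cast_of_lt b.isLt, Fin.val_inj]
      using congrArg ZMod.val hab
  · exact fun a => ⟨⟨a.val, a.val_lt⟩, ZMod.natCast_zmod_val a⟩

theorem latticeMod_comp_cellPoint_bijective [NeZero N] :
    Function.Bijective (latticeMod ι N ∘ cellPoint (N := N)) := by
  have hcast : latticeMod ι N ∘ cellPoint (N := N)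
      = Pi.map fun (_ : ι) (a : Fin N) => ((a : ℕ) : ZMod N) := by
    ext z i
    exact Int.cast_natCast _
  rw [hcast]
  exact Function.Bijective.piMap fun _ => natCast_fin_zmod_bijective

end Cell

section PlaneWave

variable {ι : Type*} [Fintype ι]

/-- The plane wave `x ↦ e^{i⟨θ,x⟩}` on `ℝ^ι`, as an additive character. -/
noncomputable def planeWave (θ : ι → ℝ) : AddChar (ι → ℝ) ℂ where
  toFun x := Complex.exp (Complex.I * ((∑ i, θ i * x i : ℝ) : ℂ))
  map_zero_eq_one' := by simp
  map_add_eq_mul' x y := by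
    simp only [Pi.add_apply, mul_add, Finset.sum_add_distrib, Complex.ofReal_add, Complex.exp_add]

theorem planeWave_apply (θ x : ι → ℝ) :
    planeWave θ x = Complex.exp (Complex.I * ((∑ i, θ i * x i : ℝ) : ℂ)) := rfl

theorem planeWave_add_left (θ θ' x : ι → ℝ) :
    planeWave (θ + θ') x = planeWave θ x * planeWave θ' x := by
  simp only [planeWave_apply, Pi.add_apply, add_mul, mul_add, Finset.sum_add_distrib,
    Complex.ofReal_add, Complex.exp_add]

theorem planeWave_dual_lattice_eq_one {a : ℝ} (ha : a ≠ 0) (k w : ι → ℤ) :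
    planeWave (fun i => 2 * Real.pi / a * k i) (fun i => a * w i) = 1 := by
  have hpair : ∑ i, 2 * Real.pi / a * k i * (a * w i)
      = ((∑ i, k i * w i : ℤ) : ℝ) * (2 * Real.pi) := by
    push_cast
    rw [Finset.sum_mul]
    refine Finset.sum_congr rfl fun i _ => ?_
    field_simp
  rw [planeWave_apply, hpair, Complex.exp_eq_one_iff]
  refine ⟨∑ i, k i * w i, ?_⟩
  push_cast
  ring

end PlaneWave

theorem apply_apply_neg {L X : Type*} [AddGroup L] {S : L → X → X} (hS0 : S 0 = id)
    (hS : ∀ a b, S (a + b) = S a ∘ S b) (a : L) (p : X) : S a (S (-a) p) = p := by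
  rw [← Function.comp_apply (f := S a), ← hS, add_neg_cancel, hS0, id]

section Bloch

variable {ι Ω E : Type*} {N : ℕ} {T : (ι → ℤ) → Ω → Ω}

/-- The inclusion of the lattice `ℤ^ι` in `ℝ^ι`. -/
def latticeInclusion (ι : Type*) : (ι → ℤ) →+ (ι → ℝ) :=
  (Int.castAddHom ℝ).compLeft ι

/-- The motion `(x, ω) ↦ (x + z, T_{-z} ω)` of `ℝ^ι × Ω`. The sign makes an `N`-stationary
field invariant under the motions with `z ∈ Nℤ^ι`. -/
def latticeMotion (T : (ι → ℤ) → Ω → Ω) (z : ι → ℤ) (p : (ι → ℝ) × Ω) : (ι → ℝ) × Ω :=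
  (p.1 + latticeInclusion ι z, T (-z) p.2)

theorem latticeMotion_add (hTadd : ∀ y z, T (y + z) = T y ∘ T z) (y z : ι → ℤ) :
    latticeMotion T (y + z) = latticeMotion T y ∘ latticeMotion T z := by
  funext p
  refine Prod.ext ?_ ?_
  · simp only [latticeMotion, Function.comp_apply, map_add, add_assoc,
      add_comm (latticeInclusion ι y)]
  · simp only [latticeMotion, Function.comp_apply, neg_add, hTadd]

variable [Fintype ι] [AddCommMonoid E] [Module ℂ E]

theorem uncurry_latticeMotion_of_stationary [NeZero N] (hT0 : T 0 = id)
    (hTadd : ∀ y z, T (y + z) = T y ∘ T z) {q v : (ι → ℝ) → Ω → E}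
    (hq : ∀ x ω (z : ι → ℤ),
      q (x + fun i => (N : ℝ) * z i) ω = q x (T (fun i => (N : ℤ) * z i) ω))
    {γ' γ : ι → ℝ} {k : ι → ℤ} (hγ : ∀ i, γ i = 2 * Real.pi / N * k i)
    (hv : ∀ x ω, v x ω = planeWave γ' x • q x ω)
    {h : ι → ℤ} (hh : latticeMod ι N h = 0) (p : (ι → ℝ) × Ω) :
    Function.uncurry v (latticeMotion T h p)
      = planeWave (γ + γ') (latticeInclusion ι h) • Function.uncurry v p := by
  obtain ⟨x, ω⟩ := p
  obtain ⟨w, hw⟩ := exists_eq_mul_of_latticeMod_eq_zero hh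
  have hincl : latticeInclusion ι h = fun i => (N : ℝ) * w i := by
    funext i
    simp [latticeInclusion, hw]
  have hdual : planeWave γ (latticeInclusion ι h) = 1 := by
    rw [hincl, funext hγ]
    exact planeWave_dual_lattice_eq_one (NeZero.ne _) k w
  have hinv : q (x + latticeInclusion ι h) (T (-h) ω) = q x ω := by
    rw [hincl, hq, ← hw, apply_apply_neg hT0 hTadd]
  calc v (x + latticeInclusion ι h) (T (-h) ω)
      = planeWave γ' (x + latticeInclusion ι h) • q x ω := by rw [hv, hinv]
    _ = planeWave (γ + γ') (latticeInclusion ι h) • planeWave γ' x • q x ω := by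
        rw [AddChar.map_add_eq_mul, planeWave_add_left, hdual, one_mul, smul_smul, mul_comm]
    _ = planeWave (γ + γ') (latticeInclusion ι h) • v x ω := by rw [hv]

variable [DecidableEq ι]

/-- The discrete Bloch transform `∑ z ∈ {0,…,N−1}^ι, e^{−i⟨θ,z⟩} v(x+z, T_{−z}ω)` of a field with
values in a complex vector space, written as a twisted sum; `discreteBloch` is the case
`E = ℂ^d`. -/
noncomputable def blochTransform (N : ℕ) (T : (ι → ℤ) → Ω → Ω) (v : (ι → ℝ) → Ω → E)
    (θ : ι → ℝ) (x : ι → ℝ) (ω : Ω) : E :=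
  twistedSum ((planeWave θ).compAddMonoidHom (latticeInclusion ι)) (latticeMotion T)
    (cellPoint (N := N)) (Function.uncurry v) (x, ω)

theorem stmt_15_general [NeZero N] (hT0 : T 0 = id)
    (hTadd : ∀ y z, T (y + z) = T y ∘ T z) {q v : (ι → ℝ) → Ω → E}
    (hq : ∀ x ω (z : ι → ℤ),
      q (x + fun i => (N : ℝ) * z i) ω = q x (T (fun i => (N : ℤ) * z i) ω))
    {γ' γ : ι → ℝ} {k : ι → ℤ} (hγ : ∀ i, γ i = 2 * Real.pi / N * k i)
    (hv : ∀ x ω, v x ω = planeWave γ' x • q x ω) (y : ι → ℤ) (x : ι → ℝ) (ω : Ω) :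
    blochTransform N T v (γ + γ') (x + fun i => (y i : ℝ)) ω
      = planeWave (γ + γ') (fun i => (y i : ℝ)) • blochTransform N T v (γ + γ') x (T y ω) := by
  have hmotion : latticeMotion T y (x, T y ω) = (x + fun i => (y i : ℝ), ω) :=
    Prod.ext rfl <| by
      simpa only [latticeMotion, neg_neg] using apply_apply_neg hT0 hTadd (-y) ω
  rw [blochTransform, ← hmotion]
  exact twistedSum_translate (latticeMotion_add hTadd) latticeMod_comp_cellPoint_bijective
    (fun _ hh => uncurry_latticeMotion_of_stationary hT0 hTadd hq hγ hv hh) y (x, T y ω)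

theorem discreteBloch_eq_blochTransform {d : ℕ} (T : (Fin d → ℤ) → Ω → Ω)
    (v : (Fin d → ℝ) → Ω → (Fin d → ℂ)) (θ : Fin d → ℝ) :
    discreteBloch (N := N) T v θ = blochTransform N T v θ := by
  funext x ω
  refine Finset.sum_congr rfl fun z _ => congrArg₂ (· • ·) ?_ ?_
  · simp [planeWave_apply, latticeInclusion, cellPoint]
  · have hcell : latticeInclusion (Fin d) (cellPoint z) = fun i => ((z i : ℕ) : ℝ) :=
      funext fun _ => Int.cast_natCast _
    simp only [Function.uncurry, latticeMotion, hcell]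
    rfl

end Bloch

theorem stmt_15 (d N : ℕ) (hd : 1 ≤ d) (hN : 1 ≤ N) (Ω : Type*)
    (T : (Fin d → ℤ) → Ω → Ω)
    (hT0 : T 0 = id)
    (hTadd : ∀ y z : Fin d → ℤ, T (y + z) = T y ∘ T z)
    (q : (Fin d → ℝ) → Ω → (Fin d → ℂ))
    (hq : ∀ (x : Fin d → ℝ) (ω : Ω) (z : Fin d → ℤ),
      q (x + fun i => (N : ℝ) * (z i : ℝ)) ω = q x (T (fun i => (N : ℤ) * z i) ω))
    (γ' γ : Fin d → ℝ) (k : Fin d → ℤ)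
    (hγ : ∀ i, γ i = 2 * Real.pi / N * (k i : ℝ))
    (v : (Fin d → ℝ) → Ω → (Fin d → ℂ))
    (hv : ∀ (x : Fin d → ℝ) (ω : Ω),
      v x ω = Complex.exp (Complex.I * ((∑ i, γ' i * x i : ℝ) : ℂ)) • q x ω)
    (y : Fin d → ℤ) (x : Fin d → ℝ) (ω : Ω) :
    discreteBloch (N := N) T v (γ + γ') (x + fun i => ((y i : ℝ))) ω
      = Complex.exp (Complex.I * ((∑ i, (γ i + γ' i) * (y i : ℝ) : ℝ) : ℂ)) •
          discreteBloch (N := N) T v (γ + γ') x (T y ω) := by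
  have : NeZero N := ⟨Nat.one_le_iff_ne_zero.mp hN⟩
  rw [discreteBloch_eq_blochTransform]
  exact stmt_15_general hT0 hTadd hq hγ hv y x ω
end
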